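/- Suppose the Coxeter system (W, S) has Property F. Let w ∈ W_c and s ∈ S with ℓ(sw) > ℓ(w), and set x = sw. Then at least one of the following holds: (i) x is a reduced product of distinct pairwise commuting generators; (ii) x ∈ W_c and there exists t ∈ S with m(s,t) ≥ 3 such that in the coset decomposition x = x_I·x^I with respect to I = {s,t} one has ℓ(x_I) > 1; (iii) x is weakly complex and x has a reduced factorization beginning with the longest element w_{st} of ⟨s,t⟩ for some t ∈ S with 3 ≤ m(s,t) < ∞; (iv) there exist u, u′ ∈ S with m(u,u′) ≥ 3, s ∉ {u, u′}, su = us and su′ = u′s such that in the decomposition w = w_I·w^I with respect to I = {u, u′} one has ℓ(w_I) > 1; (v) there exist u, u′ ∈ S with m(u,u′) ≥ 3 such that in the right coset decomposition w = (^I w)·(_I w) with respect to I = {u, u′} one has ℓ(_I w) > 1; (vi) x is weakly complex and there exist t, u ∈ S with 3 ≤ m(s,t) < ∞, m(u,t) ≥ 3 and su = us such that w has a reduced factorization w = u·(t s t s ⋯)·x′, where the alternating product of t and s beginning with t has m(s,t) − 1 factors, and ℓ(u·(tuw)) > ℓ(tuw); (vii) x is weakly complex and there exist t, u ∈ S with m(s,t)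 = 3, m(u,t) ≥ 3 and su = us such that w has a reduced factorization w = u·t·s·u·x′. -/

import Mathlib

open CoxeterSystem

variable {B W : Type*} [Group W] {M : CoxeterMatrix B} (cs : CoxeterSystem M W)

/-- `m(s,t) ≥ 3`: `s` and `t` are distinct noncommuting generators
(`M s t = 0` encodes `m(s,t) = ∞`). -/
def Noncomm (M : CoxeterMatrix B) (s t : B) : Prop := M s t = 0 ∨ 3 ≤ M s t

/-- The longest element `w_{st}` of the rank-2 parabolic subgroup `⟨s,t⟩`
(meaningful when `3 ≤ M s t < ∞`). -/
def longest (s t : B) : W := cs.wordProd (alternatingWord s t (M s t))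

/-- `w` is complex: it admits a reduced factorization `x₁ · w_{st} · x₂` where `w_{st}`
is the longest element of a rank-2 parabolic subgroup `⟨s,t⟩` with `3 ≤ m(s,t) < ∞`. -/
def IsComplex (w : W) : Prop :=
  ∃ s t : B, 3 ≤ M s t ∧ ∃ x₁ x₂ : W,
    w = x₁ * longest cs s t * x₂ ∧
    cs.length w = cs.length x₁ + cs.length (longest cs s t : W) + cs.length x₂

/-- `w` is fully commutative, i.e. `w ∈ W_c`. -/
def FullyComm (w : W) : Prop := ¬ IsComplex cs w

/-- `x` is weakly complex: `x` is complex and `x = s·u` reduced with `u` fully commutative. -/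
def IsWeaklyComplex (x : W) : Prop :=
  IsComplex cs x ∧ ∃ (s : B) (u : W), FullyComm cs u ∧ x = cs.simple s * u ∧
    cs.length x = 1 + cs.length u

/-- The alternating product `t s t s ⋯` with `k` factors, beginning with `t`. -/
def altProd (t s : B) (k : ℕ) : W :=
  cs.wordProd ((List.range k).map (fun i => if i % 2 = 0 then t else s))

/-- The left descent set `𝓛(w)`. -/
def leftDescents (w : W) : Set B := {i | cs.IsLeftDescent w i}

/-- The right descent set `𝓡(w)`. -/
def rightDescents (w : W) : Set B := {i | cs.IsRightDescent w i}

/-- `w` is a reduced product of distinct pairwise commuting generators. -/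
def IsCommProd (w : W) : Prop :=
  ∃ l : List B, l.Nodup ∧ (∀ u ∈ l, ∀ u' ∈ l, u ≠ u' → M u u' = 2) ∧
    cs.IsReduced l ∧ w = cs.wordProd l

/-- `y` is left star reducible to `x` with respect to the pair `{s,t}`:
`x` and `y` lie in the same left `{s,t}`-string and `ℓ(x) = ℓ(y) − 1`. -/
def LeftStarReducible (s t : B) (y x : W) : Prop :=
  Noncomm M s t ∧
  ((cs.IsLeftDescent y s ∧ ¬ cs.IsLeftDescent y t ∧ x = cs.simple s * y ∧
      cs.IsLeftDescent x t) ∨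
   (cs.IsLeftDescent y t ∧ ¬ cs.IsLeftDescent y s ∧ x = cs.simple t * y ∧
      cs.IsLeftDescent x s))

/-- `y` is right star reducible to `x` with respect to the pair `{s,t}`. -/
def RightStarReducible (s t : B) (y x : W) : Prop :=
  Noncomm M s t ∧
  ((cs.IsRightDescent y s ∧ ¬ cs.IsRightDescent y t ∧ x = y * cs.simple s ∧
      cs.IsRightDescent x t) ∨
   (cs.IsRightDescent y t ∧ ¬ cs.IsRightDescent y s ∧ x = y * cs.simple t ∧
      cs.IsRightDescent x s))

/-- `y` is star reducible to `x`: there is a (possibly empty) chain of left and right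
star reductions from `y` to `x`. -/
def StarReducible (y x : W) : Prop :=
  Relation.ReflTransGen
    (fun a b => ∃ s t : B, LeftStarReducible cs s t a b ∨ RightStarReducible cs s t a b) y x

/-- Property F: every fully commutative element is star reducible to a reduced product of
distinct pairwise commuting generators. -/
def PropertyF : Prop := ∀ w : W, FullyComm cs w → ∃ x : W, StarReducible cs w x ∧ IsCommProd cs x

/-- `n(w)`: the maximum `k` such that `w` admits a reduced factorization `w = w₁·w₂·w₃`
with `w₂` a reduced product of `k` distinct pairwise commuting generators. -/
noncomputable def nval (w : W) : ℕ :=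
  sSup {k | ∃ w₁ w₂ w₃ : W, w = w₁ * w₂ * w₃ ∧
    cs.length w = cs.length w₁ + cs.length w₂ + cs.length w₃ ∧
    IsCommProd cs w₂ ∧ cs.length w₂ = k}

/-- The Bruhat order: `x ≤ w` iff some reduced word for `w` has a subword that is a
reduced word for `x`. -/
def BruhatLE (x w : W) : Prop :=
  ∃ l l' : List B, cs.IsReduced l ∧ cs.wordProd l = w ∧
    l'.Sublist l ∧ cs.IsReduced l' ∧ cs.wordProd l' = x

/-- `w = wI · wII` is the coset decomposition of `w` with respect to `I = {s,t}`:
`wI ∈ W_I`, `𝓛(wII) ∩ I = ∅` and `ℓ(w) = ℓ(wI) + ℓ(wII)`. -/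
def CosetDecompL (s t : B) (w wI wII : W) : Prop :=
  w = wI * wII ∧ wI ∈ Subgroup.closure {cs.simple s, cs.simple t} ∧
  ¬ cs.IsLeftDescent wII s ∧ ¬ cs.IsLeftDescent wII t ∧
  cs.length w = cs.length wI + cs.length wII

/-- `w = wII · wI` is the right coset decomposition of `w` with respect to `I = {s,t}`:
`wI ∈ W_I`, `𝓡(wII) ∩ I = ∅` and `ℓ(w) = ℓ(wII) + ℓ(wI)`. -/
def CosetDecompR (s t : B) (w wII wI : W) : Prop :=
  w = wII * wI ∧ wI ∈ Subgroup.closure {cs.simple s, cs.simple t} ∧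
  ¬ cs.IsRightDescent wII s ∧ ¬ cs.IsRightDescent wII t ∧
  cs.length w = cs.length wII + cs.length wI

/-- `k_ε(J) = (−1)^{|J ∩ ε⁻¹(0)|}` for a set `J` of generators. -/
noncomputable def kSet (ε : B → Bool) (J : Set B) : ℤ :=
  (-1) ^ (J ∩ {i | ε i = false}).ncard

/-- `k_ε(w) = k_ε(𝓛(w)) · k_ε(𝓡(w))`. -/
noncomputable def kElt (ε : B → Bool) (w : W) : ℤ :=
  kSet ε (leftDescents cs w) * kSet ε (rightDescents cs w)

/-!
By Property F, a fully commutative element is a product of commuting generators, or else has a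
reduced expression that begins, or one that ends, with a pair of noncommuting letters. Moreover, in
a reduced expression of a fully commutative element a left descent `p` has to commute with every
letter before its first occurrence, since otherwise it could be moved to the front only through a
braid.

If `x = sw` is fully commutative and begins with a noncommuting pair containing `s`, this is (ii);
a pair avoiding `s` commutes with `s`, so that `w` begins with it and (iv) holds. If no pair stands
at the front of `x`, there is one at the end. It fails to lie in `w` only if `w = m q` and `s`
commutes with `m`. Since `x` does not begin with `s q`, the letters of `w` do not all commute, so
Property F for `w` yields a pair at the end of `w`, which is (v), or a pair `p q` at its front,
with `m = p m'` and `q` commuting with `m'`. In the second case `w` ends with `p q` if `p` commutes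
with `m'`; if not, the same argument for the shorter word `m` in place of `x` produces a pair at
the end of `m'`, which `q` can pass.

If `x` is complex, then `w = a (t s t ⋯) b` with `s` commuting with `a` and with an alternating
word of `m(s, t) - 1` letters. Since `w` contains the noncommuting letters `t` and `s`, it begins
or ends with a pair. An end pair is (v). A front pair may commute with `s`, which is (iv), or it
begins with `t`, which then commutes with `a`, so that the braid can be moved to the front of `x`:
this is (iii). Otherwise it is a pair `u t`, where `u` is the only letter of `a` that does not
commute with `t`. This is (vi) unless `u` is a left descent of the remaining word `s t ⋯ b`. If it
is, then `u` has to pass every letter before it, so that no second `t` occurs, and this is (vii).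

The reduced alternating words needed throughout exist because `st` really has order `m(s, t)`, as
the geometric representation shows; exchange comes from the action on signed reflections.
-/

section ReflectionRepresentation

open Polynomial.Chebyshev

/-- The value `-2 cos (π / M i j)` of the `i`-th simple coroot at the `j`-th simple root; if
`M i j = 0`, this is `-2`. -/
noncomputable def coxeterPairing (M : CoxeterMatrix B) (i j : B) : ℝ :=
  -2 * Real.cos (Real.pi / M i j)

theorem coxeterPairing_comm (M : CoxeterMatrix B) (i j : B) :
    coxeterPairing M i j = coxeterPairing M j i := by
  rw [coxeterPairing, M.symmetric, coxeterPairing]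

theorem coxeterPairing_self (M : CoxeterMatrix B) (i : B) : coxeterPairing M i i = 2 := by
  simp [coxeterPairing]

/-- The `i`-th simple coroot, as a linear form on the space spanned by the simple roots. -/
noncomputable def simpleCoroot (M : CoxeterMatrix B) (i : B) : Module.Dual ℝ (B →₀ ℝ) :=
  Finsupp.linearCombination ℝ (coxeterPairing M i)

theorem simpleCoroot_single (M : CoxeterMatrix B) (i j : B) :
    simpleCoroot M i (Finsupp.single j 1) = coxeterPairing M i j := by
  simp [simpleCoroot]

theorem simpleCoroot_self (M : CoxeterMatrix B) (i : B) :
    simpleCoroot M i (Finsupp.single i 1) = 2 := by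
  rw [simpleCoroot_single, coxeterPairing_self]

/-- The reflection of the span of the simple roots associated with `i`. -/
noncomputable def simpleReflection (M : CoxeterMatrix B) (i : B) :
    (B →₀ ℝ) ≃ₗ[ℝ] (B →₀ ℝ) :=
  Module.reflection (simpleCoroot_self M i)

theorem simpleReflection_apply (M : CoxeterMatrix B) (i : B) (z : B →₀ ℝ) :
    simpleReflection M i z = z - simpleCoroot M i z • Finsupp.single i 1 :=
  Module.reflection_apply _ _

theorem simpleReflection_inv (M : CoxeterMatrix B) (i : B) :
    (simpleReflection M i)⁻¹ = simpleReflection M i :=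
  Module.reflection_inv _

theorem simpleReflection_mul_pow_single (M : CoxeterMatrix B) (i j : B) (k : ℕ) :
    ((simpleReflection M i * simpleReflection M j) ^ k) (Finsupp.single i 1) =
      (S ℝ (2 * k)).eval (-coxeterPairing M i j) • Finsupp.single i 1 +
        (S ℝ (2 * k - 1)).eval (-coxeterPairing M i j) • Finsupp.single j 1 := by
  induction k with
  | zero => simp
  | succ k ih =>
    have hodd := S_add_two ℝ (2 * k - 1 : ℤ)
    have heven := S_add_two ℝ (2 * k : ℤ)
    rw [show (2 * k - 1 + 2 : ℤ) = 2 * k + 1 by ring, sub_add_cancel] at hodd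
    rw [pow_succ', LinearEquiv.mul_apply, ih, LinearEquiv.mul_apply,
      show (2 * (k + 1 : ℕ) : ℤ) = 2 * k + 2 by push_cast; ring,
      show (2 * k + 2 - 1 : ℤ) = 2 * k + 1 by ring, heven, hodd]
    simp only [simpleReflection_apply, map_add, map_sub, map_smul, simpleCoroot_single,
      coxeterPairing_comm M j i, coxeterPairing_self, Polynomial.eval_sub, Polynomial.eval_mul,
      Polynomial.eval_X]
    module

theorem sin_pi_div_pos {m : ℕ} (hm : 2 ≤ m) : 0 < Real.sin (Real.pi / m) := by
  have h : (2 : ℝ) ≤ m := by exact_mod_cast hm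
  refine Real.sin_pos_of_pos_of_lt_pi (div_pos Real.pi_pos (by linarith)) ?_
  exact div_lt_self Real.pi_pos (by linarith)

theorem simpleReflection_mul_pow_single_self {i j : B} (hM : 2 ≤ M i j) :
    ((simpleReflection M i * simpleReflection M j) ^ M i j) (Finsupp.single i 1) =
      Finsupp.single i 1 := by
  have hsin := sin_pi_div_pos hM
  have hm : (M i j : ℝ) ≠ 0 := by positivity
  have hpi : 2 * (M i j : ℝ) * (Real.pi / M i j) = 2 * Real.pi := by field_simp
  have heven := S_two_mul_real_cos (Real.pi / M i j) (2 * M i j)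
  have hodd := S_two_mul_real_cos (Real.pi / M i j) (2 * M i j - 1)
  push_cast at heven hodd
  rw [add_mul, hpi, one_mul, add_comm, Real.sin_add_two_pi] at heven
  rw [sub_add_cancel, hpi, Real.sin_two_pi] at hodd
  rw [simpleReflection_mul_pow_single, coxeterPairing, neg_mul, neg_neg,
    mul_right_cancel₀ hsin.ne' (heven.trans (one_mul _).symm),
    (mul_eq_zero.mp hodd).resolve_right hsin.ne', one_smul, zero_smul, add_zero]

theorem simpleReflection_mul_pow_of_eq_zero {i j : B} {z : B →₀ ℝ} (hi : simpleCoroot M i z = 0)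
    (hj : simpleCoroot M j z = 0) (k : ℕ) :
    ((simpleReflection M i * simpleReflection M j) ^ k) z = z := by
  induction k with
  | zero => rfl
  | succ k ih =>
    rw [pow_succ, LinearEquiv.mul_apply, LinearEquiv.mul_apply, simpleReflection_apply M j, hj,
      zero_smul, sub_zero, simpleReflection_apply, hi, zero_smul, sub_zero, ih]

theorem exists_simpleCoroot_sub_eq_zero {i j : B} (hM : 2 ≤ M i j) (z : B →₀ ℝ) :
    ∃ a b : ℝ, simpleCoroot M i (z - (a • Finsupp.single i 1 + b • Finsupp.single j 1)) = 0 ∧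
      simpleCoroot M j (z - (a • Finsupp.single i 1 + b • Finsupp.single j 1)) = 0 := by
  have hdet : 4 - coxeterPairing M i j ^ 2 ≠ 0 := by
    have := pow_pos (sin_pi_div_pos hM) 2
    rw [Real.sin_sq] at this
    rw [coxeterPairing]
    nlinarith
  refine ⟨(2 * simpleCoroot M i z - coxeterPairing M i j * simpleCoroot M j z) /
      (4 - coxeterPairing M i j ^ 2),
    (2 * simpleCoroot M j z - coxeterPairing M i j * simpleCoroot M i z) /
      (4 - coxeterPairing M i j ^ 2), ?_, ?_⟩ <;>
  · simp only [map_sub, map_add, map_smul, simpleCoroot_single, coxeterPairing_comm M j i,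
      coxeterPairing_self, smul_eq_mul]
    field_simp
    ring

theorem isLiftable_simpleReflection (M : CoxeterMatrix B) :
    M.IsLiftable (simpleReflection M) := by
  intro i j
  obtain h0 | h1 | hM : M i j = 0 ∨ M i j = 1 ∨ 2 ≤ M i j := by omega
  · rw [h0, pow_zero]
  · rw [h1, pow_one, not_ne_iff.mp (mt (M.off_diagonal i j) (not_not.mpr h1)),
      mul_eq_one_iff_eq_inv, simpleReflection_inv]
  · have hj : ((simpleReflection M i * simpleReflection M j) ^ M i j) (Finsupp.single j 1) =
        Finsupp.single j 1 := by
      have hfix := simpleReflection_mul_pow_single_self (M.symmetric i j ▸ hM)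
      have hinv : simpleReflection M i * simpleReflection M j =
          (simpleReflection M j * simpleReflection M i)⁻¹ := by
        rw [mul_inv_rev, simpleReflection_inv, simpleReflection_inv]
      rw [hinv, inv_pow, M.symmetric i j]
      exact (LinearEquiv.symm_apply_eq _).mpr hfix.symm
    refine LinearEquiv.ext fun z => ?_
    obtain ⟨a, b, hi0, hj0⟩ := exists_simpleCoroot_sub_eq_zero hM z
    have h := simpleReflection_mul_pow_of_eq_zero hi0 hj0 (M i j)
    rw [map_sub, map_add, map_smul, map_smul, simpleReflection_mul_pow_single_self hM, hj] at h
    exact sub_left_injective h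

theorem dvd_of_simpleReflection_mul_pow_eq_one {i j : B} {k : ℕ}
    (h : (simpleReflection M i * simpleReflection M j) ^ k = 1) : M i j ∣ k := by
  rcases eq_or_ne i j with rfl | hij
  · rw [M.diagonal]
    exact one_dvd k
  have hM1 := M.off_diagonal i j hij
  have hroot := simpleReflection_mul_pow_single M i j k
  rw [h] at hroot
  have hodd : (S ℝ (2 * k - 1)).eval (-coxeterPairing M i j) = 0 := by
    simpa [hij, hij.symm] using (DFunLike.congr_fun hroot j).symm
  have heven : (S ℝ (2 * k)).eval (-coxeterPairing M i j) = 1 := by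
    simpa [hij, hij.symm] using (DFunLike.congr_fun hroot i).symm
  rw [coxeterPairing, neg_mul, neg_neg] at hodd heven
  rcases Nat.eq_zero_or_pos (M i j) with h0 | hpos
  · rw [h0, Nat.cast_zero, div_zero, Real.cos_zero, mul_one, S_eval_two] at heven
    have hk : k = 0 := by simpa using heven
    exact hk ▸ dvd_zero _
  have hsin := sin_pi_div_pos (m := M i j) (by omega)
  have hcos : Real.cos (2 * k * (Real.pi / M i j)) = 1 := by
    have hodd' := S_two_mul_real_cos (Real.pi / M i j) (2 * k - 1)
    have heven' := S_two_mul_real_cos (Real.pi / M i j) (2 * k)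
    push_cast at heven' hodd'
    rw [hodd, zero_mul, sub_add_cancel] at hodd'
    rw [heven, add_mul, one_mul, one_mul, Real.sin_add, ← hodd', zero_mul, zero_add] at heven'
    exact mul_right_cancel₀ hsin.ne' (heven'.symm.trans (one_mul _).symm)
  obtain ⟨n, hn⟩ := (Real.cos_eq_one_iff _).mp hcos
  have hn' : (n : ℝ) * M i j = k := by
    have := Real.pi_pos
    field_simp at hn
    exact hn
  exact Int.natCast_dvd_natCast.mp ⟨n, by rw [mul_comm]; exact_mod_cast hn'.symm⟩

/-- The geometric representation of the Coxeter group on the span of the simple roots. -/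
noncomputable def geometricRepresentation : W →* ((B →₀ ℝ) ≃ₗ[ℝ] (B →₀ ℝ)) :=
  cs.lift ⟨simpleReflection M, isLiftable_simpleReflection M⟩

theorem geometricRepresentation_simple (i : B) :
    geometricRepresentation cs (cs.simple i) = simpleReflection M i :=
  cs.lift_apply_simple (isLiftable_simpleReflection M) i

theorem orderOf_simple_mul_simple (i j : B) : orderOf (cs.simple i * cs.simple j) = M i j := by
  refine Nat.dvd_antisymm (orderOf_dvd_of_pow_eq_one (cs.simple_mul_simple_pow i j))
    (dvd_of_simpleReflection_mul_pow_eq_one ?_)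
  rw [← geometricRepresentation_simple cs, ← geometricRepresentation_simple cs, ← map_mul,
    ← map_pow, pow_orderOf_eq_one, map_one]

end ReflectionRepresentation

section AlternatingWords

/-- The word `t s t s ⋯` with `k` letters, beginning with `t`, of which `altProd` is the product.
Mathlib's `alternatingWord` prescribes the last letter instead. -/
def altList (t s : B) (k : ℕ) : List B :=
  (List.range k).map fun i => if i % 2 = 0 then t else s

theorem altList_succ (t s : B) (k : ℕ) : altList t s (k + 1) = t :: altList s t k := by
  rw [altList, List.range_succ_eq_map, List.map_cons, List.map_map, altList]
  congr 2
  funext i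
  grind

theorem length_altList (t s : B) (k : ℕ) : (altList t s k).length = k := by
  simp [altList]

theorem eq_or_eq_of_mem_altList {t s c : B} {k : ℕ} (h : c ∈ altList t s k) : c = t ∨ c = s := by
  obtain ⟨i, -, rfl⟩ := List.mem_map.mp h
  grind

theorem take_altList (t s : B) {j k : ℕ} (h : j ≤ k) : (altList t s k).take j = altList t s j := by
  rw [altList, ← List.map_take, List.take_range, min_eq_left h, altList]

theorem reverse_alternatingWord (t s : B) (k : ℕ) :
    (alternatingWord s t k).reverse = altList t s k := by
  induction k generalizing t s with
  | zero => simp [altList, alternatingWord]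
  | succ k ih => simp [alternatingWord_succ, altList_succ, ih]

theorem altList_eq_alternatingWord (t s : B) (k : ℕ) :
    altList t s k = if Even k then alternatingWord t s k else alternatingWord s t k := by
  induction k generalizing t s with
  | zero => simp [altList, alternatingWord]
  | succ k ih =>
    rw [altList_succ, ih, alternatingWord_succ', alternatingWord_succ']
    grind

end AlternatingWords

section Exchange

theorem prod_map_alternatingWord {N : Type*} [Monoid N] (f : B → N) (i j : B) (m : ℕ) :
    ((alternatingWord i j (2 * m)).map f).prod = (f i * f j) ^ m := by
  induction m with
  | zero => simp [alternatingWord]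
  | succ m ih =>
    rw [mul_add, alternatingWord_succ, alternatingWord_succ]
    simp [ih, pow_succ]

theorem getElem_add_leftInvSeq_alternatingWord (i j : B) {k : ℕ} (hk : k < M i j) :
    (cs.leftInvSeq (alternatingWord i j (2 * M i j)))[k + M i j]'(by simp; omega) =
      (cs.leftInvSeq (alternatingWord i j (2 * M i j)))[k]'(by simp; omega) := by
  rw [cs.getElem_leftInvSeq_alternatingWord i j _ _ (by omega),
    cs.getElem_leftInvSeq_alternatingWord i j _ _ (by omega),
    cs.prod_alternatingWord_eq_mul_pow, cs.prod_alternatingWord_eq_mul_pow,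
    if_neg (by simp), if_neg (by simp), show (2 * (k + M i j) + 1) / 2 = k + M i j by omega,
    show (2 * k + 1) / 2 = k by omega, pow_add, cs.simple_mul_simple_pow', mul_one]

open scoped Classical in
theorem even_count_leftInvSeq_alternatingWord (i j : B) (t : W) :
    Even ((cs.leftInvSeq (alternatingWord i j (2 * M i j))).count t) := by
  set L := cs.leftInvSeq (alternatingWord i j (2 * M i j)) with hL
  have hlen : L.length = 2 * M i j := by simp [hL]
  have hdrop : L.drop (M i j) = L.take (M i j) := by
    refine List.ext_getElem (by simp [hlen]; omega) fun k _ hk => ?_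
    rw [List.getElem_drop, List.getElem_take]
    simp only [add_comm (M i j)]
    exact getElem_add_leftInvSeq_alternatingWord cs i j (by simp at hk; omega)
  rw [← List.take_append_drop (M i j) L, List.count_append, hdrop]
  exact Even.add_self _

open scoped Classical in
/-- The action of the `i`-th generator on reflections carrying a sign: conjugation, changing the
sign of the simple reflection itself. The signs are the elements of `ZMod 2`, and the underlying
set is all of `W` rather than the reflections. -/
noncomputable def signedConj (i : B) : Function.End (W × ZMod 2) := fun x =>
  (cs.simple i * x.1 * cs.simple i, x.2 + if x.1 = cs.simple i then 1 else 0)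

open scoped Classical in
theorem prod_map_signedConj_apply (ω : List B) (t : W) (ε : ZMod 2) :
    (ω.map (signedConj cs)).prod (t, ε) =
      (cs.wordProd ω * t * (cs.wordProd ω)⁻¹, ε + (cs.rightInvSeq ω).count t) := by
  induction ω with
  | nil => simp [Function.End.one_def]
  | cons i ω ih =>
    have hiff : cs.wordProd ω * t * (cs.wordProd ω)⁻¹ = cs.simple i ↔
        (cs.wordProd ω)⁻¹ * cs.simple i * cs.wordProd ω = t := by
      rw [mul_inv_eq_iff_eq_mul, mul_assoc, inv_mul_eq_iff_eq_mul, eq_comm]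
    rw [List.map_cons, List.prod_cons, Function.End.mul_def]
    change signedConj cs i _ = _
    rw [ih, signedConj, cs.wordProd_cons, rightInvSeq, List.count_cons]
    simp only [beq_iff_eq, ← hiff]
    simp [mul_assoc, add_assoc, apply_ite (Nat.cast : ℕ → ZMod 2)]

theorem isLiftable_signedConj : M.IsLiftable (signedConj cs) := by
  intro i j
  classical
  rw [← prod_map_alternatingWord]
  funext ⟨t, ε⟩
  have hrev : alternatingWord i j (2 * M i j) = (alternatingWord j i (2 * M i j)).reverse := by
    rw [reverse_alternatingWord, altList_eq_alternatingWord, if_pos (even_two_mul _)]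
  have heven := even_count_leftInvSeq_alternatingWord cs j i t
  rw [← ZMod.natCast_eq_zero_iff_even, M.symmetric j i] at heven
  rw [prod_map_signedConj_apply, hrev, cs.rightInvSeq_reverse, List.count_reverse, heven, add_zero,
    cs.wordProd_reverse, cs.prod_alternatingWord_eq_mul_pow, if_pos (even_two_mul _),
    Nat.mul_div_cancel_left _ two_pos, cs.simple_mul_simple_pow']
  simp [Function.End.one_def]

/-- The homomorphism from `W` to the permutations of signed reflections. -/
noncomputable def signedConjHom : W →* Function.End (W × ZMod 2) :=
  cs.lift ⟨signedConj cs, isLiftable_signedConj cs⟩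

theorem signedConjHom_wordProd (ω : List B) :
    signedConjHom cs (cs.wordProd ω) = (ω.map (signedConj cs)).prod := by
  rw [wordProd, map_list_prod, List.map_map]
  congr 2
  funext i
  exact cs.lift_apply_simple (isLiftable_signedConj cs) i

open scoped Classical in
theorem even_count_leftInvSeq_iff {ω ω' : List B} (h : cs.wordProd ω = cs.wordProd ω') (t : W) :
    Even ((cs.leftInvSeq ω).count t) ↔ Even ((cs.leftInvSeq ω').count t) := by
  have hcount (ω : List B) :
      (signedConjHom cs (cs.wordProd ω)⁻¹ (t, 0)).2 = ((cs.leftInvSeq ω).count t : ZMod 2) := by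
    rw [← cs.wordProd_reverse, signedConjHom_wordProd, prod_map_signedConj_apply,
      cs.rightInvSeq_reverse, List.count_reverse, zero_add]
  rw [← ZMod.natCast_eq_zero_iff_even, ← hcount, h, hcount, ZMod.natCast_eq_zero_iff_even]

theorem leftInvSeq_subset_of_nodup {ω ω' : List B} (h : cs.wordProd ω = cs.wordProd ω')
    (hnd : (cs.leftInvSeq ω).Nodup) : cs.leftInvSeq ω ⊆ cs.leftInvSeq ω' := by
  classical
  intro t ht
  by_contra ht'
  have := (even_count_leftInvSeq_iff cs h t).mpr
  rw [List.count_eq_one_of_mem hnd ht, List.count_eq_zero_of_not_mem ht'] at this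
  exact Nat.not_even_one (this Even.zero)

theorem isReduced_of_nodup_leftInvSeq {ω : List B} (h : (cs.leftInvSeq ω).Nodup) :
    cs.IsReduced ω := by
  obtain ⟨ω', hω', heq⟩ := cs.exists_isReduced (cs.wordProd ω)
  refine (cs.length_wordProd_le ω).antisymm ?_
  rw [heq, hω'.eq, ← cs.length_leftInvSeq ω, ← cs.length_leftInvSeq ω']
  exact (List.subperm_of_subset h (leftInvSeq_subset_of_nodup cs heq h)).length_le

theorem exists_eraseIdx_of_isLeftDescent {ω : List B} {i : B}
    (h : cs.IsLeftDescent (cs.wordProd ω) i) :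
    ∃ j < ω.length, cs.simple i * cs.wordProd ω = cs.wordProd (ω.eraseIdx j) := by
  obtain ⟨ω', hω', heq⟩ := cs.exists_isReduced (cs.simple i * cs.wordProd ω)
  have hcons : cs.wordProd (i :: ω') = cs.wordProd ω := by
    rw [cs.wordProd_cons, ← heq, cs.simple_mul_simple_cancel_left]
  have hred : cs.IsReduced (i :: ω') := by
    rw [CoxeterSystem.IsReduced, hcons, List.length_cons, ← hω'.eq, ← heq,
      cs.isLeftDescent_iff.mp h]
  have hmem := leftInvSeq_subset_of_nodup cs hcons hred.nodup_leftInvSeq List.mem_cons_self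
  obtain ⟨j, hj, hget⟩ := List.getElem_of_mem hmem
  rw [cs.length_leftInvSeq] at hj
  refine ⟨j, hj, ?_⟩
  rw [← cs.getD_leftInvSeq_mul_wordProd, List.getD_eq_getElem _ _ (by simpa), hget]

end Exchange

section ReducedAlternatingWords

theorem isReduced_altList {t s : B} {k : ℕ} (hk : M t s = 0 ∨ k ≤ M t s) :
    cs.IsReduced (altList t s k) := by
  apply isReduced_of_nodup_leftInvSeq
  rw [← take_altList t s (Nat.le_mul_of_pos_left k two_pos), altList_eq_alternatingWord,
    if_pos (even_two_mul k), cs.leftInvSeq_take, List.nodup_iff_injective_getElem]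
  intro ⟨a, ha⟩ ⟨b, hb⟩ hab
  simp only [List.length_take, cs.length_leftInvSeq, length_alternatingWord] at ha hb
  have hdiv (n : ℕ) : (2 * n + 1) / 2 = n := by omega
  simp only [List.getElem_take] at hab
  rw [cs.getElem_leftInvSeq_alternatingWord t s k a (by omega),
    cs.getElem_leftInvSeq_alternatingWord t s k b (by omega),
    cs.prod_alternatingWord_eq_mul_pow, cs.prod_alternatingWord_eq_mul_pow, hdiv, hdiv,
    if_neg (by simp), if_neg (by simp), mul_right_inj, pow_eq_pow_iff_modEq,
    orderOf_simple_mul_simple, M.symmetric s t] at hab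
  rcases hk with h0 | hk
  · rw [h0, Nat.modEq_zero_iff] at hab
    exact Fin.ext hab
  · exact Fin.ext (hab.eq_of_lt_of_lt (by omega) (by omega))

theorem longest_comm (s t : B) : longest cs s t = longest cs t s :=
  cs.wordProd_braidWord_eq s t

theorem wordProd_altList_eq_longest (s t : B) :
    cs.wordProd (altList s t (M s t)) = longest cs s t := by
  rw [altList_eq_alternatingWord]
  split_ifs
  · rfl
  · rw [M.symmetric s t]
    exact longest_comm cs t s

theorem length_longest (s t : B) : cs.length (longest cs s t) = M s t := by
  rw [← wordProd_altList_eq_longest, (isReduced_altList cs (.inr le_rfl)).eq, length_altList]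

end ReducedAlternatingWords

section Words

variable {cs}

/-- Two words of the same length with the same product; for reduced words, this means that they
are reduced expressions of the same element. -/
def WordEquiv (cs : CoxeterSystem M W) (l l' : List B) : Prop :=
  cs.wordProd l = cs.wordProd l' ∧ l.length = l'.length

namespace WordEquiv

variable {l l' l₁ l₂ l₃ : List B}

theorem refl (cs : CoxeterSystem M W) (l : List B) : WordEquiv cs l l := ⟨rfl, rfl⟩

theorem symm (h : WordEquiv cs l l') : WordEquiv cs l' l := ⟨h.1.symm, h.2.symm⟩

theorem trans (h : WordEquiv cs l₁ l₂) (h' : WordEquiv cs l₂ l₃) : WordEquiv cs l₁ l₃ :=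
  ⟨h.1.trans h'.1, h.2.trans h'.2⟩

theorem append_left (a : List B) (h : WordEquiv cs l l') : WordEquiv cs (a ++ l) (a ++ l') :=
  ⟨by rw [cs.wordProd_append, cs.wordProd_append, h.1], by simp [h.2]⟩

theorem append_right (b : List B) (h : WordEquiv cs l l') : WordEquiv cs (l ++ b) (l' ++ b) :=
  ⟨by rw [cs.wordProd_append, cs.wordProd_append, h.1], by simp [h.2]⟩

theorem cons (c : B) (h : WordEquiv cs l l') : WordEquiv cs (c :: l) (c :: l') :=
  h.append_left [c]

theorem of_cons {c : B} (h : WordEquiv cs (c :: l) (c :: l')) : WordEquiv cs l l' :=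
  ⟨by simpa [cs.wordProd_cons] using h.1, by simpa using h.2⟩

theorem reverse (h : WordEquiv cs l l') : WordEquiv cs l.reverse l'.reverse :=
  ⟨by rw [cs.wordProd_reverse, cs.wordProd_reverse, h.1], by simp [h.2]⟩

theorem isReduced (h : WordEquiv cs l l') (hl : cs.IsReduced l) : cs.IsReduced l' := by
  rw [CoxeterSystem.IsReduced, ← h.1, hl.eq, h.2]

end WordEquiv

theorem wordEquiv_altList_comm (cs : CoxeterSystem M W) (s t : B) :
    WordEquiv cs (altList s t (M s t)) (altList t s (M s t)) := by
  refine ⟨?_, by simp only [length_altList]⟩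
  rw [wordProd_altList_eq_longest, longest_comm, M.symmetric s t, wordProd_altList_eq_longest]

theorem isReduced_append_left {a b : List B} (h : cs.IsReduced (a ++ b)) : cs.IsReduced a := by
  simpa using h.take a.length

theorem isReduced_append_right {a b : List B} (h : cs.IsReduced (a ++ b)) : cs.IsReduced b := by
  simpa using h.drop a.length

theorem exists_wordProd_eq_mul {l a b : List B} (hl : cs.IsReduced l)
    (h : WordEquiv cs l (a ++ b)) :
    ∃ x, cs.wordProd l = cs.wordProd a * x ∧
      cs.length (cs.wordProd l) = cs.length (cs.wordProd a) + cs.length x := by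
  have hab := h.isReduced hl
  refine ⟨cs.wordProd b, by rw [h.1, cs.wordProd_append], ?_⟩
  rw [hl.eq, h.2, (isReduced_append_left hab).eq, (isReduced_append_right hab).eq,
    List.length_append]

theorem isReduced_cons_iff {s : B} {l : List B} (hl : cs.IsReduced l) :
    cs.IsReduced (s :: l) ↔ ¬ cs.IsLeftDescent (cs.wordProd l) s := by
  rw [cs.not_isLeftDescent_iff, CoxeterSystem.IsReduced, cs.wordProd_cons, hl.eq, List.length_cons]

theorem isLeftDescent_cons {s : B} {l : List B} (h : cs.IsReduced (s :: l)) :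
    cs.IsLeftDescent (cs.wordProd (s :: l)) s := by
  have hl : cs.IsReduced l := isReduced_append_right (a := [s]) h
  rw [CoxeterSystem.IsLeftDescent, h.eq, cs.wordProd_cons, cs.simple_mul_simple_cancel_left, hl.eq]
  exact Nat.lt_succ_self _

theorem exists_wordEquiv_cons_append {s : B} {a b : List B} (ha : cs.IsReduced (s :: a))
    (hs : cs.IsLeftDescent (cs.wordProd (a ++ b)) s) :
    ∃ b', WordEquiv cs (a ++ b) (s :: (a ++ b')) := by
  obtain ⟨j, hj, heq⟩ := exists_eraseIdx_of_isLeftDescent cs hs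
  rcases lt_or_ge j a.length with hja | haj
  · rw [List.eraseIdx_append_of_lt_length hja, cs.wordProd_append, cs.wordProd_append, ← mul_assoc,
      mul_left_inj, ← cs.wordProd_cons] at heq
    have hlen := cs.length_wordProd_le (a.eraseIdx j)
    rw [← heq, ha.eq, List.length_cons, List.length_eraseIdx_of_lt hja] at hlen
    omega
  · rw [List.eraseIdx_append_of_length_le haj] at heq
    rw [List.length_append] at hj
    refine ⟨b.eraseIdx (j - a.length), ?_, ?_⟩
    · rw [cs.wordProd_cons, ← heq, cs.simple_mul_simple_cancel_left]
    · simp only [List.length_append, List.length_cons]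
      rw [List.length_eraseIdx_of_lt (by omega)]
      omega

theorem exists_wordEquiv_cons {s : B} {l : List B} (h : cs.IsLeftDescent (cs.wordProd l) s) :
    ∃ l', WordEquiv cs l (s :: l') :=
  exists_wordEquiv_cons_append (a := []) (by simp [CoxeterSystem.IsReduced]) h

theorem isLeftDescent_iff_exists_wordEquiv {s : B} {l : List B} (hl : cs.IsReduced l) :
    cs.IsLeftDescent (cs.wordProd l) s ↔ ∃ l', WordEquiv cs l (s :: l') :=
  ⟨exists_wordEquiv_cons, fun ⟨_, h⟩ => h.1 ▸ isLeftDescent_cons (h.isReduced hl)⟩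

theorem exists_wordEquiv_altList_append {s t : B} {l : List B}
    (hs : cs.IsLeftDescent (cs.wordProd l) s) (ht : cs.IsLeftDescent (cs.wordProd l) t) {k : ℕ}
    (hk : M s t = 0 ∨ k ≤ M s t) : ∃ b, WordEquiv cs l (altList s t k ++ b) := by
  induction k generalizing s t with
  | zero => exact ⟨l, .refl cs l⟩
  | succ k ih =>
    obtain ⟨b, hb⟩ := ih ht hs (by rw [M.symmetric]; omega)
    have hred := isReduced_altList cs hk
    rw [altList_succ] at hred ⊢
    obtain ⟨b', hb'⟩ := exists_wordEquiv_cons_append hred (hb.1 ▸ hs)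
    exact ⟨b', hb.trans hb'⟩

theorem ne_zero_of_isLeftDescent {s t : B} {w : W} (hs : cs.IsLeftDescent w s)
    (ht : cs.IsLeftDescent w t) : M s t ≠ 0 := by
  intro h0
  obtain ⟨l, -, rfl⟩ := cs.exists_isReduced w
  obtain ⟨b, -, hlen⟩ := exists_wordEquiv_altList_append hs ht (k := l.length + 1) (.inl h0)
  rw [List.length_append, length_altList] at hlen
  omega

end Words

section Commutation

variable {cs}

theorem Noncomm.symm {s t : B} (h : Noncomm M s t) : Noncomm M t s := by
  rwa [Noncomm, M.symmetric]

theorem Noncomm.ne_two {s t : B} (h : Noncomm M s t) : M s t ≠ 2 := by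
  rintro h2
  simp [Noncomm, h2] at h

theorem Noncomm.ne {s t : B} (h : Noncomm M s t) : s ≠ t := by
  rintro rfl
  simp [Noncomm] at h

theorem eq_or_eq_two_or_noncomm (s t : B) : s = t ∨ M s t = 2 ∨ Noncomm M s t := by
  refine or_iff_not_imp_left.mpr fun hne => ?_
  have := M.off_diagonal s t hne
  rw [Noncomm]
  omega

theorem ne_of_eq_two {s t : B} (h : M s t = 2) : s ≠ t := by
  rintro rfl
  simp at h

/-- Every letter of the word `a` commutes with `s` and differs from it. -/
def CommutesWith (M : CoxeterMatrix B) (s : B) (a : List B) : Prop := ∀ c ∈ a, M s c = 2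

theorem commutesWith_nil (s : B) : CommutesWith M s [] := by simp [CommutesWith]

theorem commutesWith_cons {s c : B} {a : List B} :
    CommutesWith M s (c :: a) ↔ M s c = 2 ∧ CommutesWith M s a := by simp [CommutesWith]

theorem commutesWith_reverse {s : B} {a : List B} :
    CommutesWith M s a.reverse ↔ CommutesWith M s a := by simp [CommutesWith]

theorem simple_mul_simple_comm (cs : CoxeterSystem M W) {s t : B} (h : M s t = 2) :
    cs.simple s * cs.simple t = cs.simple t * cs.simple s := by
  have hpow := cs.simple_mul_simple_pow s t
  rw [h, pow_two, mul_eq_one_iff_eq_inv, mul_inv_rev, cs.inv_simple, cs.inv_simple] at hpow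
  exact hpow

theorem wordEquiv_swap (cs : CoxeterSystem M W) {s t : B} (h : M s t = 2) (l : List B) :
    WordEquiv cs (t :: s :: l) (s :: t :: l) := by
  refine ⟨?_, rfl⟩
  simp only [cs.wordProd_cons, ← mul_assoc, simple_mul_simple_comm cs h]

theorem CommutesWith.wordEquiv (cs : CoxeterSystem M W) {s : B} {a : List B}
    (h : CommutesWith M s a) (b : List B) : WordEquiv cs (a ++ s :: b) (s :: (a ++ b)) := by
  induction a with
  | nil => exact .refl cs _
  | cons c a ih =>
    obtain ⟨hc, ha⟩ := commutesWith_cons.mp h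
    exact ((ih ha).cons c).trans (wordEquiv_swap cs hc (a ++ b))

theorem wordEquiv_append_comm (cs : CoxeterSystem M W) {a k : List B}
    (h : ∀ c ∈ k, CommutesWith M c a) (b : List B) :
    WordEquiv cs (a ++ (k ++ b)) (k ++ (a ++ b)) := by
  induction k with
  | nil => exact .refl cs _
  | cons c k ih =>
    rw [List.forall_mem_cons] at h
    exact (h.1.wordEquiv cs (k ++ b)).trans ((ih h.2).cons c)

theorem isLeftDescent_of_cons {s c : B} {l : List B} (hc : M s c = 2) (hl : cs.IsReduced (c :: l))
    (h : cs.IsLeftDescent (cs.wordProd (c :: l)) s) : cs.IsLeftDescent (cs.wordProd l) s := by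
  have hred : cs.IsReduced [s, c] := isReduced_altList cs (k := 2) (by omega)
  obtain ⟨b, hb⟩ := exists_wordEquiv_cons_append (a := [c]) hred h
  exact (isLeftDescent_iff_exists_wordEquiv (isReduced_append_right (a := [c]) hl)).mpr
    ⟨b, (hb.trans (wordEquiv_swap cs hc b).symm).of_cons⟩

theorem CommutesWith.isLeftDescent_of_append {s : B} {a b : List B} (ha : CommutesWith M s a)
    (hab : cs.IsReduced (a ++ b)) (h : cs.IsLeftDescent (cs.wordProd (a ++ b)) s) :
    cs.IsLeftDescent (cs.wordProd b) s := by
  induction a with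
  | nil => exact h
  | cons c a ih =>
    obtain ⟨hc, ha⟩ := commutesWith_cons.mp ha
    exact ih ha (isReduced_append_right (a := [c]) hab) (isLeftDescent_of_cons hc hab h)

end Commutation

section FullyCommutativeWords

variable {cs}

theorem isComplex_wordProd_iff {l : List B} (hl : cs.IsReduced l) :
    IsComplex cs (cs.wordProd l) ↔
      ∃ p q a b, 3 ≤ M p q ∧ WordEquiv cs l (a ++ altList p q (M p q) ++ b) := by
  constructor
  · rintro ⟨p, q, hpq, x₁, x₂, heq, hlen⟩
    obtain ⟨a, ha, rfl⟩ := cs.exists_isReduced x₁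
    obtain ⟨b, hb, rfl⟩ := cs.exists_isReduced x₂
    refine ⟨p, q, a, b, hpq, ?_, ?_⟩
    · rw [heq, cs.wordProd_append, cs.wordProd_append, wordProd_altList_eq_longest]
    · rw [← hl.eq, hlen, ha.eq, hb.eq, length_longest, List.length_append, List.length_append,
        length_altList]
  · rintro ⟨p, q, a, b, hpq, h⟩
    have hred := h.isReduced hl
    refine ⟨p, q, hpq, cs.wordProd a, cs.wordProd b, ?_, ?_⟩
    · rw [h.1, cs.wordProd_append, cs.wordProd_append, wordProd_altList_eq_longest]
    · rw [hl.eq, h.2, (isReduced_append_left (isReduced_append_left hred)).eq,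
        (isReduced_append_right hred).eq, length_longest, List.length_append, List.length_append,
        length_altList]

/-- A reduced expression of a fully commutative element. -/
def IsFCWord (cs : CoxeterSystem M W) (l : List B) : Prop :=
  cs.IsReduced l ∧ FullyComm cs (cs.wordProd l)

theorem WordEquiv.isFCWord {l l' : List B} (h : WordEquiv cs l l') (hl : IsFCWord cs l) :
    IsFCWord cs l' :=
  ⟨h.isReduced hl.1, h.1 ▸ hl.2⟩

theorem not_isFCWord_append_altList {p q : B} (hpq : 3 ≤ M p q) (a b : List B) :
    ¬ IsFCWord cs (a ++ altList p q (M p q) ++ b) := fun h =>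
  h.2 ((isComplex_wordProd_iff h.1).mpr ⟨p, q, a, b, hpq, .refl cs _⟩)

theorem wordEquiv_reverse_altList (cs : CoxeterSystem M W) (s t : B) :
    WordEquiv cs (altList s t (M s t)).reverse (altList s t (M s t)) := by
  refine ⟨?_, List.length_reverse⟩
  rw [← reverse_alternatingWord, List.reverse_reverse, reverse_alternatingWord,
    wordProd_altList_eq_longest, longest_comm, longest, M.symmetric]

namespace IsFCWord

theorem append_right {a b : List B} (h : IsFCWord cs (a ++ b)) : IsFCWord cs b := by
  have hb := isReduced_append_right h.1
  refine ⟨hb, fun hc => ?_⟩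
  obtain ⟨p, q, a', b', hpq, hequiv⟩ := (isComplex_wordProd_iff hb).mp hc
  have h' := (hequiv.append_left a).isFCWord h
  rw [← List.append_assoc, ← List.append_assoc] at h'
  exact not_isFCWord_append_altList hpq _ _ h'

theorem reverse {l : List B} (hl : IsFCWord cs l) : IsFCWord cs l.reverse := by
  refine ⟨hl.1.reverse, fun hc => ?_⟩
  obtain ⟨p, q, a, b, hpq, hequiv⟩ := (isComplex_wordProd_iff hl.1.reverse).mp hc
  have h := hequiv.reverse
  rw [List.reverse_reverse, List.reverse_append, List.reverse_append] at h
  have h' := h.trans (((wordEquiv_reverse_altList cs p q).append_right a.reverse).append_left _)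
  rw [← List.append_assoc] at h'
  exact not_isFCWord_append_altList hpq _ _ (h'.isFCWord hl)

theorem append_left {a b : List B} (h : IsFCWord cs (a ++ b)) : IsFCWord cs a := by
  have h' := h.reverse
  rw [List.reverse_append] at h'
  simpa using h'.append_right.reverse

theorem of_cons {c : B} {l : List B} (h : IsFCWord cs (c :: l)) : IsFCWord cs l :=
  append_right (a := [c]) h

theorem eq_two_of_isLeftDescent {l : List B} (hl : IsFCWord cs l) {s t : B}
    (hs : cs.IsLeftDescent (cs.wordProd l) s) (ht : cs.IsLeftDescent (cs.wordProd l) t)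
    (hst : s ≠ t) : M s t = 2 := by
  obtain ⟨b, hb⟩ := exists_wordEquiv_altList_append hs ht (.inr le_rfl)
  have h0 := ne_zero_of_isLeftDescent hs ht
  have h1 := M.off_diagonal s t hst
  by_contra h2
  exact not_isFCWord_append_altList (by omega) [] b (hb.isFCWord hl)

theorem isLeftDescent_of_cons {p c : B} {l : List B} (hl : IsFCWord cs (c :: l))
    (h : cs.IsLeftDescent (cs.wordProd (c :: l)) p) (hpc : p ≠ c) :
    M p c = 2 ∧ cs.IsLeftDescent (cs.wordProd l) p := by
  have hcomm := hl.eq_two_of_isLeftDescent h (isLeftDescent_cons hl.1) hpc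
  exact ⟨hcomm, _root_.isLeftDescent_of_cons hcomm hl.1 h⟩

theorem exists_eq_append_of_isLeftDescent {p : B} {l : List B} (hl : IsFCWord cs l)
    (h : cs.IsLeftDescent (cs.wordProd l) p) : ∃ a b, l = a ++ p :: b ∧ CommutesWith M p a := by
  induction l with
  | nil => exact absurd h (cs.not_isLeftDescent_one p)
  | cons c l ih =>
    rcases eq_or_ne p c with rfl | hpc
    · exact ⟨[], l, rfl, commutesWith_nil p⟩
    · obtain ⟨hcomm, hp⟩ := hl.isLeftDescent_of_cons h hpc
      obtain ⟨a, b, rfl, ha⟩ := ih hl.of_cons hp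
      exact ⟨c :: a, b, rfl, commutesWith_cons.mpr ⟨hcomm, ha⟩⟩

theorem perm {l l' : List B} (hl : IsFCWord cs l) (h : WordEquiv cs l l') : l.Perm l' := by
  induction l' generalizing l with
  | nil => exact .of_eq (List.length_eq_zero_iff.mp h.2)
  | cons c l' ih =>
    obtain ⟨a, b, rfl, ha⟩ := hl.exists_eq_append_of_isLeftDescent
      ((isLeftDescent_iff_exists_wordEquiv hl.1).mpr ⟨l', h⟩)
    have hmove := ha.wordEquiv cs b
    exact List.perm_middle.trans
      ((ih (hmove.isFCWord hl).of_cons (hmove.symm.trans h).of_cons).cons c)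

end IsFCWord

end FullyCommutativeWords

section CosetDecompositions

variable {cs}

theorem exists_cosetDecompL_mul {s t : B} {u y : W}
    (hu : u ∈ Subgroup.closure {cs.simple s, cs.simple t})
    (hlen : cs.length (u * y) = cs.length u + cs.length y) :
    ∃ wI wII, CosetDecompL cs s t (u * y) wI wII ∧ cs.length u ≤ cs.length wI := by
  induction hn : cs.length y generalizing u y with
  | zero =>
    refine ⟨u, y, ⟨rfl, hu, ?_, ?_, hlen⟩, le_rfl⟩ <;>
    · rw [cs.length_eq_zero_iff.mp hn]
      exact cs.not_isLeftDescent_one _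
  | succ n ih =>
    by_cases h : ∃ i, cs.simple i ∈ Subgroup.closure {cs.simple s, cs.simple t} ∧
      cs.IsLeftDescent y i
    · obtain ⟨i, hi, hy⟩ := h
      have hy' := cs.isLeftDescent_iff.mp hy
      have hmul : u * y = u * cs.simple i * (cs.simple i * y) := by simp [mul_assoc]
      have hle := cs.length_mul_le (u * cs.simple i) (cs.simple i * y)
      have hle' := cs.length_mul_le u (cs.simple i)
      rw [← hmul] at hle
      rw [cs.length_simple] at hle'
      obtain ⟨wI, wII, hw, hlt⟩ := ih (mul_mem hu hi) (y := cs.simple i * y)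
        (by rw [← hmul]; omega) (by omega)
      exact ⟨wI, wII, hmul ▸ hw, by omega⟩
    · have hmem := Subgroup.subset_closure (k := {cs.simple s, cs.simple t})
      exact ⟨u, y, ⟨rfl, hu, fun hs => h ⟨s, hmem (by simp), hs⟩,
        fun ht => h ⟨t, hmem (by simp), ht⟩, hlen⟩, le_rfl⟩

theorem CosetDecompL.inv {s t : B} {w wI wII : W} (h : CosetDecompL cs s t w wI wII) :
    CosetDecompR cs s t w⁻¹ wII⁻¹ wI⁻¹ := by
  obtain ⟨rfl, hmem, hs, ht, hlen⟩ := h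
  refine ⟨mul_inv_rev _ _, inv_mem hmem, ?_, ?_, ?_⟩
  · rwa [cs.isRightDescent_inv_iff]
  · rwa [cs.isRightDescent_inv_iff]
  · rw [cs.length_inv, cs.length_inv, cs.length_inv, hlen, add_comm]

end CosetDecompositions

section StarReductions

variable {cs} {p q : B}

/-- The element expressed by `l` has a reduced expression beginning with the noncommuting letters
`p q`; equivalently, if it is fully commutative, it admits a left star reduction removing `p`. -/
def StartsWith (cs : CoxeterSystem M W) (p q : B) (l : List B) : Prop :=
  Noncomm M p q ∧ ∃ b, WordEquiv cs l (p :: q :: b)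

/-- The element expressed by `l` has a reduced expression ending with the noncommuting letters
`p q`. -/
def EndsWith (cs : CoxeterSystem M W) (p q : B) (l : List B) : Prop :=
  StartsWith cs q p l.reverse

namespace StartsWith

theorem congr {l l' : List B} (h : StartsWith cs p q l) (hl : WordEquiv cs l l') :
    StartsWith cs p q l' :=
  ⟨h.1, h.2.imp fun _ hb => hl.symm.trans hb⟩

theorem append {l : List B} (h : StartsWith cs p q l) (l' : List B) :
    StartsWith cs p q (l ++ l') := by
  obtain ⟨hpq, b, hb⟩ := h
  exact ⟨hpq, b ++ l', hb.append_right l'⟩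

theorem cons {c : B} {l : List B} (h : StartsWith cs p q l) (hp : M p c = 2) (hq : M q c = 2) :
    StartsWith cs p q (c :: l) := by
  obtain ⟨hpq, b, hb⟩ := h
  exact ⟨hpq, c :: b, (hb.cons c).trans
    ((wordEquiv_swap cs hp (q :: b)).trans ((wordEquiv_swap cs hq b).cons p))⟩

theorem isLeftDescent {l : List B} (h : StartsWith cs p q l) (hl : cs.IsReduced l) :
    cs.IsLeftDescent (cs.wordProd l) p := by
  obtain ⟨-, b, hb⟩ := h
  exact (isLeftDescent_iff_exists_wordEquiv hl).mpr ⟨q :: b, hb⟩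

theorem tail_of_ne {c : B} {l : List B} (h : StartsWith cs p q (c :: l))
    (hl : IsFCWord cs (c :: l)) (hcp : c ≠ p) :
    M p c = 2 ∧ M q c = 2 ∧ StartsWith cs p q l := by
  obtain ⟨hp, hpl⟩ := hl.isLeftDescent_of_cons (h.isLeftDescent hl.1) hcp.symm
  obtain ⟨hpq, b, hb⟩ := h
  obtain ⟨l', hl'⟩ := exists_wordEquiv_cons hpl
  have hmove : WordEquiv cs (c :: l) (p :: c :: l') :=
    (hl'.cons c).trans (wordEquiv_swap cs hp l')
  have hfc := (hmove.isFCWord hl).of_cons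
  have hqc : q ≠ c := by
    rintro rfl
    exact hpq.ne_two hp
  obtain ⟨hq, hql⟩ := hfc.isLeftDescent_of_cons ((isLeftDescent_iff_exists_wordEquiv hfc.1).mpr
    ⟨b, (hmove.symm.trans hb).of_cons⟩) hqc
  obtain ⟨b', hb'⟩ := exists_wordEquiv_cons hql
  exact ⟨hp, hq, hpq, b', hl'.trans (hb'.cons p)⟩

theorem init_or {z : B} {l : List B} (h : StartsWith cs p q (l ++ [z]))
    (hl : IsFCWord cs (l ++ [z])) :
    StartsWith cs p q l ∨ z = q ∧ ∃ l', WordEquiv cs l (p :: l') ∧ CommutesWith M q l' := by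
  induction l with
  | nil =>
    obtain ⟨-, b, -, hlen⟩ := h
    simp at hlen
  | cons c l ih =>
    rcases eq_or_ne c p with rfl | hcp
    · obtain ⟨hcq, b, hb⟩ := h
      obtain ⟨a, e, heq, ha⟩ := hl.of_cons.exists_eq_append_of_isLeftDescent
        ((isLeftDescent_iff_exists_wordEquiv hl.of_cons.1).mpr ⟨b, hb.of_cons⟩)
      rcases e.eq_nil_or_concat' with rfl | ⟨e, z', rfl⟩
      · obtain ⟨rfl, hzq⟩ := List.append_inj' heq rfl
        exact .inr ⟨List.singleton_injective hzq, l, .refl cs _, ha⟩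
      · rw [← List.cons_append, ← List.append_assoc] at heq
        obtain ⟨rfl, -⟩ := List.append_inj' heq rfl
        exact .inl ⟨hcq, a ++ e, (ha.wordEquiv cs e).cons c⟩
    · obtain ⟨hp, hq, h⟩ := h.tail_of_ne hl hcp
      refine (ih h hl.of_cons).imp (·.cons hp hq) (And.imp_right ?_)
      rintro ⟨l', hl', hql'⟩
      exact ⟨c :: l', (hl'.cons c).trans (wordEquiv_swap cs hp l'),
        commutesWith_cons.mpr ⟨hq, hql'⟩⟩

theorem exists_cosetDecompL {l : List B} (h : StartsWith cs p q l) (hl : cs.IsReduced l) :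
    ∃ wI wII, CosetDecompL cs p q (cs.wordProd l) wI wII ∧ 1 < cs.length wI := by
  obtain ⟨-, b, hb⟩ := h
  have hpq : cs.IsReduced [p, q] := isReduced_append_left (b := b) (hb.isReduced hl)
  have hmem : cs.wordProd [p, q] ∈ Subgroup.closure {cs.simple p, cs.simple q} := by
    rw [cs.wordProd_cons, cs.wordProd_singleton]
    exact mul_mem (Subgroup.subset_closure (by simp)) (Subgroup.subset_closure (by simp))
  obtain ⟨x, hx, hlen⟩ := exists_wordProd_eq_mul (a := [p, q]) hl hb
  obtain ⟨wI, wII, hw, hle⟩ := exists_cosetDecompL_mul hmem (hx ▸ hlen)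
  rw [hpq.eq] at hle
  exact ⟨wI, wII, hx ▸ hw, hle⟩

end StartsWith

namespace EndsWith

theorem congr {l l' : List B} (h : EndsWith cs p q l) (hl : WordEquiv cs l l') :
    EndsWith cs p q l' :=
  StartsWith.congr h hl.reverse

theorem append_left {l : List B} (h : EndsWith cs p q l) (l' : List B) :
    EndsWith cs p q (l' ++ l) := by
  rw [EndsWith, List.reverse_append]
  exact StartsWith.append h l'.reverse

theorem tail_or {c : B} {l : List B} (h : EndsWith cs p q (c :: l)) (hl : IsFCWord cs (c :: l)) :
    EndsWith cs p q l ∨ c = p ∧ ∃ l', WordEquiv cs l (l' ++ [q]) ∧ CommutesWith M p l' := by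
  have hrev := hl.reverse
  rw [EndsWith, List.reverse_cons] at h
  rw [List.reverse_cons] at hrev
  refine (h.init_or hrev).imp id (And.imp_right ?_)
  rintro ⟨l', hl', hp⟩
  exact ⟨l'.reverse, by simpa using hl'.reverse, commutesWith_reverse.mpr hp⟩

theorem exists_cosetDecompR {l : List B} (h : EndsWith cs p q l) (hl : cs.IsReduced l) :
    ∃ wII wI, CosetDecompR cs q p (cs.wordProd l) wII wI ∧ 1 < cs.length wI := by
  obtain ⟨wI, wII, hw, hlen⟩ := StartsWith.exists_cosetDecompL h hl.reverse
  rw [cs.wordProd_reverse] at hw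
  exact ⟨wII⁻¹, wI⁻¹, by simpa only [inv_inv] using hw.inv, by rwa [cs.length_inv]⟩

end EndsWith

theorem LeftStarReducible.exists_startsWith {s t : B} {l : List B} {x : W}
    (h : LeftStarReducible cs s t (cs.wordProd l) x) : ∃ p q, StartsWith cs p q l := by
  have key {p q : B} (hpq : Noncomm M p q) (hp : cs.IsLeftDescent (cs.wordProd l) p)
      (hq : cs.IsLeftDescent (cs.simple p * cs.wordProd l) q) : StartsWith cs p q l := by
    obtain ⟨l', hl'⟩ := exists_wordEquiv_cons hp
    rw [hl'.1, cs.wordProd_cons, cs.simple_mul_simple_cancel_left] at hq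
    obtain ⟨b, hb⟩ := exists_wordEquiv_cons hq
    exact ⟨hpq, b, hl'.trans (hb.cons p)⟩
  obtain ⟨hst, ⟨hs, -, rfl, ht⟩ | ⟨ht, -, rfl, hs⟩⟩ := h
  exacts [⟨s, t, key hst hs ht⟩, ⟨t, s, key hst.symm ht hs⟩]

theorem RightStarReducible.inv {s t : B} {y x : W} (h : RightStarReducible cs s t y x) :
    LeftStarReducible cs s t y⁻¹ x⁻¹ := by
  obtain ⟨hst, ⟨hs, ht, rfl, hx⟩ | ⟨ht, hs, rfl, hx⟩⟩ := h
  · exact ⟨hst, .inl ⟨cs.isLeftDescent_inv_iff.mpr hs, mt cs.isLeftDescent_inv_iff.mp ht, by simp,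
      cs.isLeftDescent_inv_iff.mpr hx⟩⟩
  · exact ⟨hst, .inr ⟨cs.isLeftDescent_inv_iff.mpr ht, mt cs.isLeftDescent_inv_iff.mp hs, by simp,
      cs.isLeftDescent_inv_iff.mpr hx⟩⟩

theorem IsFCWord.isCommProd_iff {l : List B} (hl : IsFCWord cs l) :
    IsCommProd cs (cs.wordProd l) ↔ l.Pairwise (M · · = 2) := by
  have hsymm : Std.Symm (M · · = 2) := ⟨fun s t h => (M.symmetric t s).trans h⟩
  constructor
  · rintro ⟨l', hnd, hcomm, hl', heq⟩
    have hequiv : WordEquiv cs l l' := ⟨heq, by rw [← hl.1.eq, heq, hl'.eq]⟩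
    refine ((hl.perm hequiv).pairwise_iff fun h => hsymm.symm _ _ h).mpr ?_
    exact hnd.pairwise_of_forall_ne hcomm
  · intro h
    exact ⟨l, h.imp ne_of_eq_two, fun u hu u' hu' => h.forall hu hu', hl.1, rfl⟩

theorem IsFCWord.pairwise_or_startsWith_or_endsWith (hF : PropertyF cs) {l : List B}
    (hl : IsFCWord cs l) :
    l.Pairwise (M · · = 2) ∨ (∃ p q, StartsWith cs p q l) ∨ ∃ p q, EndsWith cs p q l := by
  obtain ⟨x, hred, hx⟩ := hF _ hl.2
  rcases hred.cases_head with rfl | ⟨y, ⟨s, t, hstep | hstep⟩, -⟩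
  · exact .inl (hl.isCommProd_iff.mp hx)
  · exact .inr (.inl hstep.exists_startsWith)
  · have h := hstep.inv
    rw [← cs.wordProd_reverse] at h
    obtain ⟨p, q, h⟩ := h.exists_startsWith
    exact .inr (.inr ⟨q, p, h⟩)

end StarReductions

section FullyCommutativeProducts

variable {cs}

theorem endsWith_of_wordEquiv {p q : B} {l a : List B} (hpq : Noncomm M p q)
    (h : WordEquiv cs l (a ++ [p, q])) : EndsWith cs p q l :=
  ⟨hpq.symm, a.reverse, by simpa using h.reverse⟩

theorem IsFCWord.exists_endsWith (hF : PropertyF cs) {s : B} {l : List B}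
    (hl : IsFCWord cs (s :: l)) (hpair : ¬ (s :: l).Pairwise (M · · = 2))
    (hstart : ∀ p q, ¬ StartsWith cs p q (s :: l)) : ∃ p q, EndsWith cs p q l := by
  induction hn : l.length using Nat.strong_induction_on generalizing s l with
  | _ n ih =>
  obtain ⟨s', q, hend⟩ :=
    ((hl.pairwise_or_startsWith_or_endsWith hF).resolve_left hpair).resolve_left
      fun ⟨p, q, h⟩ => hstart p q h
  have hsq := hend.1.symm
  rcases hend.tail_or hl with h | ⟨rfl, m, hm, hsm⟩
  · exact ⟨s', q, h⟩
  have hfc := hm.isFCWord hl.of_cons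
  have hstart_m p' q' : ¬ StartsWith cs p' q' m := fun h =>
    hstart p' q' ((h.append [s, q]).congr ((hm.cons s).trans (hsm.wordEquiv cs [q]).symm).symm)
  rcases hfc.pairwise_or_startsWith_or_endsWith hF with h | ⟨p', q', h⟩ | ⟨p', q', h⟩
  · have hqm : CommutesWith M q m := fun c hc =>
      (M.symmetric q c).trans ((List.pairwise_append.mp h).2.2 c hc q (by simp))
    exact absurd ⟨hsq, _, (hm.trans (hqm.wordEquiv cs [])).cons s⟩ (hstart s q)
  · obtain ⟨rfl, m', hm', hqm'⟩ := (h.init_or hfc).resolve_left (hstart_m p' q')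
    have hl' : WordEquiv cs l (p' :: (m' ++ [q])) := hm.trans (hm'.append_right [q])
    by_cases hpair' : (p' :: m').Pairwise (M · · = 2)
    · have hpm' : CommutesWith M p' m' := (List.pairwise_cons.mp hpair').1
      exact ⟨p', q, endsWith_of_wordEquiv h.1 (hl'.trans (hpm'.wordEquiv cs [q]).symm)⟩
    · have hlen := hl'.2
      rw [List.length_cons, List.length_append] at hlen
      obtain ⟨a, b, hab⟩ := ih m'.length (by omega) (hm'.isFCWord hfc.append_left) hpair'
        (fun a b hab => hstart_m a b (hab.congr hm'.symm)) rfl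
      have hmove : WordEquiv cs l ([p', q] ++ m') := by
        simpa using hl'.trans ((hqm'.wordEquiv cs []).cons p')
      exact ⟨a, b, (hab.append_left [p', q]).congr hmove.symm⟩
  · exact ⟨p', q', h.congr hm.symm⟩

theorem IsFCWord.cons_cases (hF : PropertyF cs) {s : B} {l : List B} (hl : IsFCWord cs (s :: l)) :
    (s :: l).Pairwise (M · · = 2) ∨ (∃ t, StartsWith cs s t (s :: l)) ∨
      (∃ p q, M s p = 2 ∧ M s q = 2 ∧ StartsWith cs p q l) ∨ ∃ p q, EndsWith cs p q l := by
  by_cases hpair : (s :: l).Pairwise (M · · = 2)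
  · exact .inl hpair
  by_cases hstart : ∃ p q, StartsWith cs p q (s :: l)
  · obtain ⟨p, q, h⟩ := hstart
    rcases eq_or_ne s p with rfl | hsp
    · exact .inr (.inl ⟨q, h⟩)
    · obtain ⟨hp, hq, h⟩ := h.tail_of_ne hl hsp
      exact .inr (.inr (.inl
        ⟨p, q, (M.symmetric s p).trans hp, (M.symmetric s q).trans hq, h⟩))
  · push Not at hstart
    exact .inr (.inr (.inr (hl.exists_endsWith hF hpair hstart)))

end FullyCommutativeProducts

section ComplexProducts

variable {cs} {s t p q : B}

theorem exists_wordEquiv_altList_pred_append {l : List B} (hred : cs.IsReduced (s :: l))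
    (ht : cs.IsLeftDescent (cs.wordProd (s :: l)) t) (hst : Noncomm M s t) :
    3 ≤ M s t ∧ ∃ b, WordEquiv cs l (altList t s (M s t - 1) ++ b) := by
  have hs := isLeftDescent_cons hred
  have h3 : 3 ≤ M s t := hst.resolve_left (ne_zero_of_isLeftDescent hs ht)
  obtain ⟨b, hb⟩ := exists_wordEquiv_altList_append hs ht (.inr le_rfl)
  rw [← Nat.sub_add_cancel (one_le_two.trans (Nat.le_of_succ_le h3)), altList_succ] at hb
  exact ⟨h3, b, hb.of_cons⟩

theorem isLeftDescent_altList_append {a : List B} {k : ℕ} (hk : 0 < k)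
    (h : cs.IsReduced (altList p q k ++ a)) :
    cs.IsLeftDescent (cs.wordProd (altList p q k ++ a)) p := by
  obtain ⟨k, rfl⟩ := Nat.exists_eq_succ_of_ne_zero hk.ne'
  rw [Nat.succ_eq_add_one, altList_succ] at h ⊢
  exact isLeftDescent_cons h

theorem commutesWith_altList {c : B} (hp : M c p = 2) (hq : M c q = 2) (k : ℕ) :
    CommutesWith M c (altList p q k) := fun _ hd =>
  (eq_or_eq_of_mem_altList hd).elim (· ▸ hp) (· ▸ hq)

namespace IsFCWord

theorem exists_noncomm_isLeftDescent {l b : List B} (hl : IsFCWord cs l)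
    (hred : cs.IsReduced (s :: l)) (hpq : 3 ≤ M p q)
    (h : WordEquiv cs (s :: l) (altList p q (M p q) ++ b)) :
    ∃ c, Noncomm M s c ∧ cs.IsLeftDescent (cs.wordProd (s :: l)) c := by
  have hp : cs.IsLeftDescent (cs.wordProd (s :: l)) p := by
    rw [h.1]
    exact isLeftDescent_altList_append (by omega) (h.isReduced hred)
  have hq : cs.IsLeftDescent (cs.wordProd (s :: l)) q := by
    have h' := h.trans ((wordEquiv_altList_comm cs p q).append_right b)
    rw [h'.1]
    exact isLeftDescent_altList_append (by omega) (h'.isReduced hred)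
  have hnc : Noncomm M p q := .inr hpq
  rcases eq_or_eq_two_or_noncomm (M := M) s p with rfl | hsp | hsp
  · exact ⟨q, hnc, hq⟩
  · rcases eq_or_eq_two_or_noncomm (M := M) s q with rfl | hsq | hsq
    · exact ⟨p, hnc.symm, hp⟩
    · have hcomm := commutesWith_altList hsp hsq (M p q)
      have hs := h.1 ▸ isLeftDescent_cons hred
      obtain ⟨b', hb'⟩ :=
        exists_wordEquiv_cons (hcomm.isLeftDescent_of_append (h.isReduced hred) hs)
      have hl' := ((h.trans (hb'.append_left _)).trans (hcomm.wordEquiv cs b')).of_cons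
      exact absurd (hl'.isFCWord hl) (not_isFCWord_append_altList hpq [] b')
    · exact ⟨q, hsq, hq⟩
  · exact ⟨p, hsp, hp⟩

theorem exists_commutesWith_noncomm_isLeftDescent {l a b : List B} (hl : IsFCWord cs l)
    (hred : cs.IsReduced (s :: l)) (hpq : 3 ≤ M p q)
    (h : WordEquiv cs (s :: l) (a ++ altList p q (M p q) ++ b)) :
    ∃ a' l' t, CommutesWith M s a' ∧ WordEquiv cs l (a' ++ l') ∧ Noncomm M s t ∧
      cs.IsLeftDescent (cs.wordProd (s :: l')) t := by
  induction a generalizing l with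
  | nil =>
    obtain ⟨c, hsc, hc⟩ := hl.exists_noncomm_isLeftDescent hred hpq h
    exact ⟨[], l, c, commutesWith_nil s, .refl cs l, hsc, hc⟩
  | cons c a ih =>
    have hred' := h.isReduced hred
    rcases eq_or_eq_two_or_noncomm (M := M) s c with rfl | hsc | hsc
    · exact absurd (h.of_cons.isFCWord hl) (not_isFCWord_append_altList hpq a b)
    · obtain ⟨l₁, hl₁⟩ := exists_wordEquiv_cons
        (_root_.isLeftDescent_of_cons hsc hred' (h.1 ▸ isLeftDescent_cons hred))
      have hmove : WordEquiv cs l (c :: l₁) :=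
        (h.trans ((hl₁.cons c).trans (wordEquiv_swap cs hsc l₁))).of_cons
      obtain ⟨a', l', t, ha', hequiv, ht⟩ := ih (hmove.isFCWord hl).of_cons
        (hl₁.isReduced (isReduced_append_right (a := [c]) hred')) hl₁.symm
      exact ⟨c :: a', l', t, commutesWith_cons.mpr ⟨hsc, ha'⟩, hmove.trans (hequiv.cons c), ht⟩
    · exact ⟨[], l, c, commutesWith_nil s, .refl cs l, hsc, h.1 ▸ isLeftDescent_cons hred'⟩

theorem exists_wordEquiv_append_altList_of_isComplex {l : List B} (hl : IsFCWord cs l)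
    (hred : cs.IsReduced (s :: l)) (hc : IsComplex cs (cs.wordProd (s :: l))) :
    ∃ a t b, CommutesWith M s a ∧ 3 ≤ M s t ∧
      WordEquiv cs l (a ++ (altList t s (M s t - 1) ++ b)) := by
  obtain ⟨p, q, a, b, hpq, h⟩ := (isComplex_wordProd_iff hred).mp hc
  obtain ⟨a', l', t, ha', hl', hst, ht⟩ :=
    hl.exists_commutesWith_noncomm_isLeftDescent hred hpq h
  have hmove := (hl'.cons s).trans (ha'.wordEquiv cs l').symm
  obtain ⟨h3, b', hb'⟩ := exists_wordEquiv_altList_pred_append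
    (isReduced_append_right (hmove.isReduced hred)) ht hst
  exact ⟨a', t, b', ha', h3, hl'.trans (hb'.append_left a')⟩

theorem eq_or_eq_two_of_isLeftDescent_append {a c : List B}
    (hl : IsFCWord cs (a ++ t :: s :: c)) (hsa : CommutesWith M s a) (hst : M s t ≠ 2)
    (hp : cs.IsLeftDescent (cs.wordProd (a ++ t :: s :: c)) p) :
    p = t ∧ CommutesWith M t a ∨ M s p = 2 := by
  induction a with
  | nil =>
    rcases eq_or_ne p t with rfl | hpt
    · exact .inl ⟨rfl, commutesWith_nil p⟩
    obtain ⟨hpt2, hp⟩ := hl.isLeftDescent_of_cons hp hpt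
    have hps : p ≠ s := by
      rintro rfl
      exact hst hpt2
    exact .inr ((M.symmetric s p).trans (hl.of_cons.isLeftDescent_of_cons hp hps).1)
  | cons x a ih =>
    obtain ⟨hsx, hsa⟩ := commutesWith_cons.mp hsa
    rcases eq_or_ne p x with rfl | hpx
    · exact .inr hsx
    obtain ⟨hpx2, hp⟩ := hl.isLeftDescent_of_cons hp hpx
    refine (ih hl.of_cons hsa hp).imp_left ?_
    rintro ⟨rfl, hpa⟩
    exact ⟨rfl, commutesWith_cons.mpr ⟨hpx2, hpa⟩⟩

theorem startsWith_append_cases {a c : List B} (hl : IsFCWord cs (a ++ t :: s :: c))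
    (hsa : CommutesWith M s a) (hst : M s t ≠ 2) (h : StartsWith cs p q (a ++ t :: s :: c)) :
    p = t ∧ CommutesWith M t a ∨ (M s p = 2 ∧ M s q = 2) ∨
      q = t ∧ M s p = 2 ∧
        ∃ a', WordEquiv cs a (p :: a') ∧ CommutesWith M s a' ∧ CommutesWith M t a' := by
  induction a with
  | nil =>
    rcases eq_or_ne t p with rfl | htp
    · exact .inl ⟨rfl, commutesWith_nil t⟩
    obtain ⟨hpt, -, h⟩ := h.tail_of_ne hl htp
    have hsp : s ≠ p := by
      rintro rfl
      exact hst hpt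
    obtain ⟨hps, hqs, -⟩ := h.tail_of_ne hl.of_cons hsp
    exact .inr (.inl ⟨(M.symmetric s p).trans hps, (M.symmetric s q).trans hqs⟩)
  | cons x a ih =>
    obtain ⟨hsx, hsa⟩ := commutesWith_cons.mp hsa
    rcases eq_or_ne x p with rfl | hxp
    · obtain ⟨-, b, hb⟩ := h
      rcases hl.of_cons.eq_or_eq_two_of_isLeftDescent_append hsa hst
        ((isLeftDescent_iff_exists_wordEquiv hl.of_cons.1).mpr ⟨b, hb.of_cons⟩) with
        ⟨rfl, hqa⟩ | hsq
      · exact .inr (.inr ⟨rfl, hsx, a, .refl cs _, hsa, hqa⟩)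
      · exact .inr (.inl ⟨hsx, hsq⟩)
    · obtain ⟨hpx, hqx, h⟩ := h.tail_of_ne hl hxp
      rcases ih hl.of_cons hsa h with ⟨rfl, hpa⟩ | hcomm | ⟨rfl, hsp, a', ha', hsa', hqa'⟩
      · exact .inl ⟨rfl, commutesWith_cons.mpr ⟨hpx, hpa⟩⟩
      · exact .inr (.inl hcomm)
      · exact .inr (.inr ⟨rfl, hsp, x :: a', (ha'.cons x).trans (wordEquiv_swap cs hpx a'),
          commutesWith_cons.mpr ⟨hsx, hsa'⟩, commutesWith_cons.mpr ⟨hqx, hqa'⟩⟩)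

theorem cons_cases_of_isComplex (hF : PropertyF cs) {l : List B} (hl : IsFCWord cs l)
    (hred : cs.IsReduced (s :: l)) (hc : IsComplex cs (cs.wordProd (s :: l))) :
    (∃ t b, 3 ≤ M s t ∧ WordEquiv cs (s :: l) (altList s t (M s t) ++ b)) ∨
      (∃ p q, M s p = 2 ∧ M s q = 2 ∧ StartsWith cs p q l) ∨ (∃ p q, EndsWith cs p q l) ∨
      ∃ t u b, 3 ≤ M s t ∧ Noncomm M u t ∧ M s u = 2 ∧
        WordEquiv cs l (u :: (altList t s (M s t - 1) ++ b)) := by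
  obtain ⟨a, t, b, hsa, hst, h⟩ := hl.exists_wordEquiv_append_altList_of_isComplex hred hc
  have hmove {a' : List B} (hs : CommutesWith M s a') (ht : CommutesWith M t a') :
      WordEquiv cs (a' ++ (altList t s (M s t - 1) ++ b))
        (altList t s (M s t - 1) ++ (a' ++ b)) :=
    wordEquiv_append_comm cs
      (fun c hc => (eq_or_eq_of_mem_altList hc).elim (· ▸ ht) (· ▸ hs)) b
  have hfc := h.isFCWord hl
  obtain ⟨k, hk⟩ := Nat.exists_eq_add_of_le' hst
  have halt : altList t s (M s t - 1) = t :: s :: altList t s k := by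
    rw [hk, Nat.add_sub_cancel (n := k + 2) (m := 1), altList_succ, altList_succ]
  rcases hfc.pairwise_or_startsWith_or_endsWith hF with hpair | ⟨p, q, hpq⟩ | ⟨p, q, hpq⟩
  · rw [halt] at hpair
    have hts := List.rel_of_pairwise_cons (List.pairwise_append.mp hpair).2.1
      (List.mem_cons_self (a := s))
    rw [M.symmetric] at hts
    omega
  · rcases startsWith_append_cases (halt ▸ hfc) hsa (by omega) (halt ▸ hpq) with
      ⟨rfl, hta⟩ | ⟨hsp, hsq⟩ | ⟨rfl, hsp, a', ha', hsa', hta'⟩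
    · have hbraid : s :: altList p s (M s p - 1) = altList s p (M s p) := by
        rw [← altList_succ, Nat.sub_add_cancel (by omega)]
      exact .inl ⟨p, a ++ b, hst, hbraid ▸ (h.trans (hmove hsa hta)).cons s⟩
    · exact .inr (.inl ⟨p, q, hsp, hsq, hpq.congr h.symm⟩)
    · exact .inr (.inr (.inr ⟨q, p, a' ++ b, hst, hpq.1, hsp,
        h.trans ((ha'.append_right _).trans ((hmove hsa' hta').cons p))⟩))
  · exact .inr (.inr (.inl ⟨p, q, hpq.congr h.symm⟩))

end IsFCWord

theorem IsFCWord.eq_three_of_isLeftDescent_altList_append {c : List B}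
    (hl : IsFCWord cs (altList s t (M s t - 2) ++ c)) (hst : 3 ≤ M s t) (hsp : M s p = 2)
    (hpt : Noncomm M p t)
    (hp : cs.IsLeftDescent (cs.wordProd (altList s t (M s t - 2) ++ c)) p) :
    M s t = 3 ∧ ∃ c', WordEquiv cs c (p :: c') := by
  obtain ⟨k, hk⟩ := Nat.exists_eq_add_of_le' hst
  rw [hk, Nat.add_sub_cancel (n := k + 1) (m := 2), altList_succ] at hl hp
  obtain ⟨-, hp⟩ := hl.isLeftDescent_of_cons hp (ne_of_eq_two hsp).symm
  cases k with
  | zero => exact ⟨hk, exists_wordEquiv_cons hp⟩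
  | succ k =>
    rw [altList_succ] at hl hp
    exact absurd (hl.of_cons.isLeftDescent_of_cons hp hpt.ne).1 hpt.ne_two

theorem IsFCWord.exists_braid_factorization {u : B} {l b : List B} (hl : IsFCWord cs l)
    (hst : 3 ≤ M s t) (hut : Noncomm M u t) (hsu : M s u = 2)
    (h : WordEquiv cs l (u :: (altList t s (M s t - 1) ++ b))) :
    (∃ x, cs.wordProd l = cs.simple u * altProd cs t s (M s t - 1) * x ∧
      cs.length (cs.wordProd l) =
        1 + cs.length (altProd cs t s (M s t - 1)) + cs.length x ∧
      cs.length (cs.simple t * cs.simple u * cs.wordProd l) <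
        cs.length (cs.simple u * (cs.simple t * cs.simple u * cs.wordProd l))) ∨
    M s t = 3 ∧ ∃ x, cs.wordProd l =
        cs.simple u * cs.simple t * cs.simple s * cs.simple u * x ∧
      cs.length (cs.wordProd l) = 4 + cs.length x := by
  have hfc := h.isFCWord hl
  have halt : altList t s (M s t - 1) = t :: altList s t (M s t - 2) := by
    rw [← altList_succ, show M s t - 1 = M s t - 2 + 1 by omega]
  have htail : cs.simple t * cs.simple u * cs.wordProd l =
      cs.wordProd (altList s t (M s t - 2) ++ b) := by
    rw [h.1, halt, List.cons_append, cs.wordProd_cons, cs.wordProd_cons, mul_assoc,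
      cs.simple_mul_simple_cancel_left, cs.simple_mul_simple_cancel_left]
  by_cases hu : cs.IsLeftDescent (cs.wordProd (altList s t (M s t - 2) ++ b)) u
  · rw [halt] at hfc
    obtain ⟨h3, c, hc⟩ :=
      hfc.of_cons.of_cons.eq_three_of_isLeftDescent_altList_append hst hsu hut hu
    rw [h3] at h
    have hl' : WordEquiv cs l ([u, t, s, u] ++ c) := h.trans (hc.append_left [u, t, s])
    obtain ⟨x, hx, hlen⟩ := exists_wordProd_eq_mul hl.1 hl'
    rw [(isReduced_append_left (hl'.isReduced hl.1)).eq] at hlen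
    refine .inr ⟨h3, x, hx.trans ?_, hlen⟩
    simp only [cs.wordProd_cons, cs.wordProd_nil, mul_assoc, one_mul]
  · rw [← List.cons_append] at h
    obtain ⟨x, hx, hlen⟩ := exists_wordProd_eq_mul hl.1 h
    have hred := isReduced_append_left (h.isReduced hl.1)
    have hred' : cs.IsReduced (altList t s (M s t - 1)) := isReduced_append_right (a := [u]) hred
    rw [hred.eq, List.length_cons, ← hred'.eq, add_comm _ 1] at hlen
    rw [cs.wordProd_cons] at hx
    refine .inl ⟨x, hx, hlen, ?_⟩
    rw [htail, cs.not_isLeftDescent_iff.mp hu]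
    exact Nat.lt_succ_self _

end ComplexProducts

/-- Lemma 6.9: suppose `W` has Property F, `w ∈ W_c`, `s ∈ S` with `ℓ(sw) > ℓ(w)`, and
set `x = sw`.  Then at least one of the alternatives (i)–(vii) holds. -/
theorem statement6 (hF : PropertyF cs) (w : W) (hw : FullyComm cs w) (s : B)
    (hlen : cs.length w < cs.length (cs.simple s * w)) :
    -- (i) `x` is a reduced product of distinct pairwise commuting generators
    IsCommProd cs (cs.simple s * w) ∨
    -- (ii) `x ∈ W_c` and there is `t` with `m(s,t) ≥ 3` such that in `x = x_I·x^I`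
    -- with respect to `I = {s,t}` one has `ℓ(x_I) > 1`
    (FullyComm cs (cs.simple s * w) ∧ ∃ t : B, Noncomm M s t ∧ ∃ xI xII : W,
      CosetDecompL cs s t (cs.simple s * w) xI xII ∧ 1 < cs.length xI) ∨
    -- (iii) `x` is weakly complex with a reduced factorization beginning with `w_{st}`
    (IsWeaklyComplex cs (cs.simple s * w) ∧ ∃ t : B, 3 ≤ M s t ∧ ∃ x' : W,
      cs.simple s * w = longest cs s t * x' ∧
      cs.length (cs.simple s * w) = cs.length (longest cs s t : W) + cs.length x') ∨
    -- (iv) there are `u, u'` with `m(u,u') ≥ 3`, `s ∉ {u,u'}`, `su = us`, `su' = u's`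
    -- such that in `w = w_I·w^I` with respect to `I = {u,u'}` one has `ℓ(w_I) > 1`
    (∃ u u' : B, Noncomm M u u' ∧ s ≠ u ∧ s ≠ u' ∧ M s u = 2 ∧ M s u' = 2 ∧
      ∃ wI wII : W, CosetDecompL cs u u' w wI wII ∧ 1 < cs.length wI) ∨
    -- (v) there are `u, u'` with `m(u,u') ≥ 3` such that in the right coset
    -- decomposition `w = (^I w)·(_I w)` with respect to `I = {u,u'}` one has `ℓ(_I w) > 1`
    (∃ u u' : B, Noncomm M u u' ∧ ∃ wII wI : W,
      CosetDecompR cs u u' w wII wI ∧ 1 < cs.length wI) ∨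
    -- (vi) `x` is weakly complex and there are `t, u` with `3 ≤ m(s,t) < ∞`,
    -- `m(u,t) ≥ 3`, `su = us` such that `w = u·(tsts⋯)·x'` reduced, the alternating
    -- product having `m(s,t) − 1` factors, and `ℓ(u·(tuw)) > ℓ(tuw)`
    (IsWeaklyComplex cs (cs.simple s * w) ∧ ∃ t u : B, 3 ≤ M s t ∧ Noncomm M u t ∧
      M s u = 2 ∧ ∃ x' : W,
      w = cs.simple u * altProd cs t s (M s t - 1) * x' ∧
      cs.length w = 1 + cs.length (altProd cs t s (M s t - 1) : W) + cs.length x' ∧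
      cs.length (cs.simple t * cs.simple u * w) <
        cs.length (cs.simple u * (cs.simple t * cs.simple u * w))) ∨
    -- (vii) `x` is weakly complex and there are `t, u` with `m(s,t) = 3`, `m(u,t) ≥ 3`,
    -- `su = us` such that `w = u·t·s·u·x'` reduced
    (IsWeaklyComplex cs (cs.simple s * w) ∧ ∃ t u : B, M s t = 3 ∧ Noncomm M u t ∧
      M s u = 2 ∧ ∃ x' : W,
      w = cs.simple u * cs.simple t * cs.simple s * cs.simple u * x' ∧
      cs.length w = 4 + cs.length x') := by
  obtain ⟨l, hl, rfl⟩ := cs.exists_isReduced w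
  have hfc : IsFCWord cs l := ⟨hl, hw⟩
  have hred : cs.IsReduced (s :: l) := (isReduced_cons_iff hl).mpr hlen.not_gt
  rw [← cs.wordProd_cons] at *
  by_cases hx : FullyComm cs (cs.wordProd (s :: l))
  · rcases IsFCWord.cons_cases hF ⟨hred, hx⟩ with h | ⟨t, h⟩ | ⟨u, u', hu, hu', h⟩ | ⟨u, u', h⟩
    · exact .inl ((IsFCWord.isCommProd_iff ⟨hred, hx⟩).mpr h)
    · exact .inr (.inl ⟨hx, t, h.1, h.exists_cosetDecompL hred⟩)
    · exact .inr (.inr (.inr (.inl ⟨u, u', h.1, ne_of_eq_two hu, ne_of_eq_two hu', hu, hu',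
        h.exists_cosetDecompL hl⟩)))
    · exact .inr (.inr (.inr (.inr (.inl ⟨u', u, h.1, h.exists_cosetDecompR hl⟩))))
  · have hwc : IsWeaklyComplex cs (cs.wordProd (s :: l)) :=
      ⟨not_not.mp hx, s, cs.wordProd l, hw, cs.wordProd_cons s l, by
        rw [hred.eq, hl.eq, List.length_cons, add_comm]⟩
    rcases hfc.cons_cases_of_isComplex hF hred hwc.1 with
      ⟨t, b, hst, h⟩ | ⟨u, u', hu, hu', h⟩ | ⟨u, u', h⟩ | ⟨t, u, b, hst, hut, hsu, h⟩
    · exact .inr (.inr (.inl ⟨hwc, t, hst, wordProd_altList_eq_longest cs s t ▸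
        exists_wordProd_eq_mul hred h⟩))
    · exact .inr (.inr (.inr (.inl ⟨u, u', h.1, ne_of_eq_two hu, ne_of_eq_two hu', hu, hu',
        h.exists_cosetDecompL hl⟩)))
    · exact .inr (.inr (.inr (.inr (.inl ⟨u', u, h.1, h.exists_cosetDecompR hl⟩))))
    · refine .inr (.inr (.inr (.inr (.inr ?_))))
      exact (hfc.exists_braid_factorization hst hut hsu h).imp
        (fun h => ⟨hwc, t, u, hst, hut, hsu, h⟩) fun ⟨h3, h⟩ => ⟨hwc, t, u, h3, hut, hsu, h⟩
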